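/- A finite set D with |D| = k is an S-parking set of the finite sets A_1,…,A_k if and only if there exists a permutation π_1,π_2,…,π_k of {1,…,k} such that for every i = 1,2,…,k, D ∩ A_{π_i} ∩ ⋁_{i ≤ j ≤ k} A_{π_j} ≠ ∅. -/

import Mathlib

/-- `⋁_{i ∈ I} A i`: the (finite) set of elements belonging to exactly one of the
sets `A i` with `i ∈ I`. -/
def onlyOne {α : Type*} [DecidableEq α] {k : ℕ} (A : Fin k → Finset α)
    (I : Finset (Fin k)) : Finset α :=
  (I.biUnion A).filter fun e => (I.filter fun i => e ∈ A i).card = 1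

/-- `D` is an S-parking set of the sets `A 0, …, A (k-1)`. -/
def IsSParkingSet {α : Type*} [DecidableEq α] {k : ℕ} (A : Fin k → Finset α)
    (D : Finset α) : Prop :=
  D.card = k ∧ ∀ I : Finset (Fin k), I.Nonempty → (D ∩ onlyOne A I).Nonempty

/-!
Call `j ∈ I` removable from `I` if `D ∩ A j` meets `⋁_{i ∈ I} A i`. An element of `A j` lying in
exactly one member of a family still does so in every subfamily containing `A j`, so removability
passes to smaller index sets containing `j`.

If every nonempty index set has a removable element, removing such elements one at a time from the
full index set lists the indices in the required order. Conversely, given such an order, the first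
element of an index set `I` is removable from all the indices from it on, hence from `I`.
-/

section EliminationOrder

variable {ι : Type*} [DecidableEq ι] {k : ℕ} {P : ι → Finset ι → Prop}

/-- The enumeration `π 0, π 1, …` of `ι` is an elimination order for `P` if, when the elements are
removed from `ι` in this order, each one satisfies `P` relative to the set of elements that are
still present just before its removal (this set contains the element itself). -/
def IsEliminationOrder (P : ι → Finset ι → Prop) (π : Fin k ≃ ι) : Prop :=
  ∀ i, P (π i) ((Finset.Ici i).image π)

theorem exists_isEliminationOrder [Fintype ι] (hk : Fintype.card ι = k)
    (hP : ∀ I : Finset ι, I.Nonempty → ∃ j ∈ I, P j I) :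
    ∃ π : Fin k ≃ ι, IsEliminationOrder P π := by
  induction k generalizing ι with
  | zero => exact ⟨(Fintype.equivFinOfCardEq hk).symm, fun i => i.elim0⟩
  | succ k ih =>
    have : Nonempty ι := Fintype.card_pos_iff.mp (by lia)
    obtain ⟨j, -, hj⟩ := hP Finset.univ Finset.univ_nonempty
    obtain ⟨σ, hσ⟩ : ∃ σ : Fin k ≃ {i // i ≠ j},
        IsEliminationOrder (fun i (I : Finset {i // i ≠ j}) => P i (I.image Subtype.val)) σ := by
      refine ih (by simp [Fintype.card_subtype_compl, hk]) fun I hI => ?_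
      simpa using hP (I.image Subtype.val) (hI.image _)
    let π : Fin (k + 1) ≃ ι :=
      (finSuccEquiv k).trans (σ.optionCongr.trans (Equiv.optionSubtypeNe j))
    have π_zero : π 0 = j := rfl
    have π_succ (i : Fin k) : π i.succ = σ i := by simp [π]
    refine ⟨π, Fin.cases ?_ fun i => ?_⟩
    · have image_Ici_zero : (Finset.Ici 0).image π = Finset.univ := by
        ext
        simp
      rwa [π_zero, image_Ici_zero]
    · have image_Ici_succ : (Finset.Ici i.succ).image π =
          ((Finset.Ici i).image σ).image Subtype.val := by
        simp only [← Fin.finsetImage_succ_Ici, Finset.image_image, Function.comp_def, π_succ]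
      rw [π_succ, image_Ici_succ]
      exact hσ i

theorem IsEliminationOrder.exists_mem {π : Fin k ≃ ι} (hπ : IsEliminationOrder P π)
    (hP : ∀ ⦃j I J⦄, I ⊆ J → j ∈ I → P j J → P j I) {I : Finset ι} (hI : I.Nonempty) :
    ∃ j ∈ I, P j I := by
  obtain ⟨j, hj, first⟩ := I.exists_min_image π.symm hI
  have I_subset : I ⊆ (Finset.Ici (π.symm j)).image π := fun x hx =>
    Finset.mem_image.mpr ⟨π.symm x, Finset.mem_Ici.mpr (first x hx), π.apply_symm_apply x⟩
  exact ⟨j, hj, hP I_subset hj (by simpa using hπ (π.symm j))⟩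

end EliminationOrder

section OnlyOne

variable {α : Type*} [DecidableEq α] {k : ℕ} {A : Fin k → Finset α} {I J : Finset (Fin k)}
  {j : Fin k} {e : α}

theorem mem_onlyOne : e ∈ onlyOne A I ↔ ∃! i, i ∈ I ∧ e ∈ A i := by
  simp only [onlyOne, Finset.mem_filter, Finset.mem_biUnion, Finset.card_eq_one_iff_existsUnique]
  exact and_iff_right_of_imp ExistsUnique.exists

theorem mem_onlyOne_of_subset (hIJ : I ⊆ J) (hj : j ∈ I) (hej : e ∈ A j)
    (he : e ∈ onlyOne A J) : e ∈ onlyOne A I :=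
  mem_onlyOne.mpr ⟨j, ⟨hj, hej⟩, fun _ hi =>
    (mem_onlyOne.mp he).unique ⟨hIJ hi.1, hi.2⟩ ⟨hIJ hj, hej⟩⟩

theorem inter_onlyOne_nonempty_iff {D : Set α} :
    (D ∩ onlyOne A I).Nonempty ↔ ∃ j ∈ I, (D ∩ A j ∩ onlyOne A I).Nonempty := by
  constructor
  · rintro ⟨e, heD, he⟩
    obtain ⟨j, hj, hej⟩ := (mem_onlyOne.mp he).exists
    exact ⟨j, hj, e, ⟨heD, hej⟩, he⟩
  · rintro ⟨j, -, e, ⟨heD, -⟩, he⟩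
    exact ⟨e, heD, he⟩

end OnlyOne

theorem sparking_set_iff_perm_general {α : Type*} [DecidableEq α] {k : ℕ}
    (A : Fin k → Finset α) (D : Set α) :
    (∀ I : Finset (Fin k), I.Nonempty → (D ∩ onlyOne A I).Nonempty) ↔
      ∃ π : Equiv.Perm (Fin k), ∀ i : Fin k,
        (D ∩ A (π i) ∩ onlyOne A ((Finset.Ici i).image π)).Nonempty := by
  let Removable (j : Fin k) (I : Finset (Fin k)) : Prop := (D ∩ A j ∩ onlyOne A I).Nonempty
  have removable_of_subset ⦃j I J⦄ (hIJ : I ⊆ J) (hj : j ∈ I) :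
      Removable j J → Removable j I := fun ⟨e, he, heJ⟩ =>
    ⟨e, he, mem_onlyOne_of_subset hIJ hj he.2 heJ⟩
  constructor
  · intro h
    exact exists_isEliminationOrder (P := Removable) (Fintype.card_fin k) fun I hI =>
      inter_onlyOne_nonempty_iff.mp (h I hI)
  · rintro ⟨π, hπ : IsEliminationOrder Removable π⟩ I hI
    exact inter_onlyOne_nonempty_iff.mpr (hπ.exists_mem removable_of_subset hI)

theorem sparking_set_iff_perm {α : Type*} [DecidableEq α] {k : ℕ}
    (A : Fin k → Finset α) (D : Finset α) (hD : D.card = k) :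
    IsSParkingSet A D ↔
      ∃ π : Equiv.Perm (Fin k), ∀ i : Fin k,
        (D ∩ A (π i) ∩ onlyOne A ((Finset.Ici i).image π)).Nonempty := by
  simpa only [IsSParkingSet, hD, true_and, ← Finset.coe_inter, Finset.coe_nonempty] using
    sparking_set_iff_perm_general A (D : Set α)
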